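/- arXiv:2006.02042 — 5 statements merged into one kernel-verified Lean document; each statement's English description precedes it below -/
import Mathlib

section
/- Let b₀ be any element of ℂ(t,M) and define p₁ = a₁(t,M)·b₀ + a₀(t,t²M)/a₁(t,t²M), p₋₁ = a₋₁(t,M)·b₀ + a₀(t,t⁻²M)/a₋₁(t,t⁻²M), and p₀ = a₀(t,M)·b₀ + a₁(t,t⁻²M)/a₋₁(t,t⁻²M) + a₋₁(t,t²M)/a₁(t,t²M) in ℂ(t,M). Then the two equations p₁(t,M) = p₋₁(t,M⁻¹) and p₀(t,M) = p₀(t,M⁻¹) hold simultaneously if and only if b₀(t,M⁻¹) = −b₀(t,M). -/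
/-!
The inversion `M ↦ M⁻¹` exchanges `a₁` with `-a₋₁`, negates `a₀`, and exchanges the shifts
`M ↦ t²M` and `M ↦ t⁻²M`. Hence the fractions occurring in `p₁` and `p₋₁` correspond to each
other, the two fractions in `p₀` are swapped, and
`p₁(t,M) - p₋₁(t,M⁻¹) = a₁ (b₀(t,M) + b₀(t,M⁻¹))`,
`p₀(t,M) - p₀(t,M⁻¹) = a₀ (b₀(t,M) + b₀(t,M⁻¹))`.
Since `a₁ ≠ 0`, the first condition is already equivalent to `b₀(t,M⁻¹) = -b₀(t,M)`, and the
second follows from it.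
-/

noncomputable section

/-- The Laurent polynomial ring `ℂ[t^{±1}, M^{±1}]`, realized as the group algebra of `ℤ × ℤ`
over `ℂ`.  The element `mon a b` below is the monomial `t^a * M^b`. -/
abbrev R2 : Type := AddMonoidAlgebra ℂ (ℤ × ℤ)

instance : IsDomain R2 := NoZeroDivisors.to_isDomain _

/-- The monomial `t^a * M^b` in `ℂ[t^{±1}, M^{±1}]`. -/
def mon (a b : ℤ) : R2 := AddMonoidAlgebra.single (a, b) (1 : ℂ)
/-- The exponent map corresponding to the substitution `(t, M) ↦ (t, t²M)`. -/
def eU : (ℤ × ℤ) ≃+ (ℤ × ℤ) where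
  toFun p := (p.1 + 2 * p.2, p.2)
  invFun p := (p.1 - 2 * p.2, p.2)
  left_inv p := by ext <;> simp
  right_inv p := by ext <;> simp
  map_add' p q := by ext <;> simp <;> ring

/-- The exponent map corresponding to the substitution `(t, M) ↦ (t, t⁻²M)`. -/
def eD : (ℤ × ℤ) ≃+ (ℤ × ℤ) where
  toFun p := (p.1 - 2 * p.2, p.2)
  invFun p := (p.1 + 2 * p.2, p.2)
  left_inv p := by ext <;> simp
  right_inv p := by ext <;> simp
  map_add' p q := by ext <;> simp <;> ring

/-- The exponent map corresponding to the substitution `(t, M) ↦ (t, M⁻¹)`. -/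
def eI : (ℤ × ℤ) ≃+ (ℤ × ℤ) where
  toFun p := (p.1, -p.2)
  invFun p := (p.1, -p.2)
  left_inv p := by ext <;> simp
  right_inv p := by ext <;> simp
  map_add' p q := by ext <;> simp <;> ring

/-- The substitution automorphism `F(t, M) ↦ F(t, t²M)` of `ℂ[t^{±1}, M^{±1}]`. -/
def sU : R2 ≃ₐ[ℂ] R2 := AddMonoidAlgebra.domCongr ℂ ℂ eU

/-- The substitution automorphism `F(t, M) ↦ F(t, t⁻²M)` of `ℂ[t^{±1}, M^{±1}]`. -/
def sD : R2 ≃ₐ[ℂ] R2 := AddMonoidAlgebra.domCongr ℂ ℂ eD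

/-- The substitution automorphism `F(t, M) ↦ F(t, M⁻¹)` of `ℂ[t^{±1}, M^{±1}]`. -/
def sI : R2 ≃ₐ[ℂ] R2 := AddMonoidAlgebra.domCongr ℂ ℂ eI
/-- `a₁(t,M) = t⁻²M² − t²M⁻²`. -/
def a1 : R2 := mon (-2) 2 - mon 2 (-2)

/-- `a₋₁(t,M) = t²M² − t⁻²M⁻²`. -/
def am1 : R2 := mon 2 2 - mon (-2) (-2)

/-- `a₀(t,M) = (M² − M⁻²)(−M⁴ − M⁻⁴ + M² + M⁻² + t⁴ + t⁻⁴)`. -/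
def a0 : R2 :=
  (mon 0 2 - mon 0 (-2)) *
    (-(mon 0 4) - mon 0 (-4) + mon 0 2 + mon 0 (-2) + mon 4 0 + mon (-4) 0)

/-- `A₁(t,M) = −a₁(t,M)·a₁(t,t²M)·a₋₁(t,t⁻²M)`. -/
def A1 : R2 := -(a1 * sU a1 * sD am1)

/-- `B₁(t,M) = a₀(t,M)·a₁(t,t²M)·a₋₁(t,t⁻²M)`. -/
def B1 : R2 := a0 * sU a1 * sD am1

/-- `C₁(t,M) = −a₁(t,M)·a₁(t,t⁻²M)·a₁(t,t²M) + a₀(t,M)·a₀(t,t²M)·a₋₁(t,t⁻²M)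
    − a₁(t,M)·a₋₁(t,t⁻²M)·a₋₁(t,t²M)`. -/
def C1 : R2 := -(a1 * sD a1 * sU a1) + a0 * sU a0 * sD am1 - a1 * sD am1 * sU am1
/-- The fraction field `ℂ(t, M)` of the Laurent polynomial ring `ℂ[t^{±1}, M^{±1}]`. -/
abbrev K2 : Type := FractionRing R2

/-- The canonical inclusion `ℂ[t^{±1}, M^{±1}] → ℂ(t, M)`. -/
def ι : R2 →+* K2 := algebraMap R2 K2

/-- The substitution automorphism of `ℂ(t,M)` fixing `t` and sending `M` to `M⁻¹`. -/
def σI : K2 ≃+* K2 := IsFractionRing.ringEquivOfRingEquiv (sI : R2 ≃+* R2)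

lemma sU_mon (a b : ℤ) : sU (mon a b) = mon (a + 2 * b) b := by
  simp [sU, mon, eU]

lemma sD_mon (a b : ℤ) : sD (mon a b) = mon (a - 2 * b) b := by
  simp [sD, mon, eD]

lemma sI_mon (a b : ℤ) : sI (mon a b) = mon a (-b) := by
  simp [sI, mon, eI]

lemma σI_ι (x : R2) : σI (ι x) = ι (sI x) := by
  simp [σI, ι]

lemma sI_am1 : sI am1 = -a1 := by
  simp [am1, a1, sI_mon]

lemma sI_a0 : sI a0 = -a0 := by
  simp only [a0, map_mul, map_sub, map_add, map_neg, sI_mon, neg_neg, neg_zero]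
  ring

lemma sI_sD_a0 : sI (sD a0) = -sU a0 := by
  simp only [a0, map_mul, map_sub, map_add, map_neg, sI_mon, sU_mon, sD_mon]
  norm_num
  ring

lemma sI_sD_am1 : sI (sD am1) = -sU a1 := by
  simp [am1, a1, sI_mon, sU_mon, sD_mon]

lemma sI_sU_a1 : sI (sU a1) = -sD am1 := by
  simp [am1, a1, sI_mon, sU_mon, sD_mon]

lemma sI_sD_a1 : sI (sD a1) = -sU am1 := by
  simp [am1, a1, sI_mon, sU_mon, sD_mon]

lemma sI_sU_am1 : sI (sU am1) = -sD a1 := by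
  simp [am1, a1, sI_mon, sU_mon, sD_mon]

lemma a1_ne_zero : a1 ≠ 0 := by
  rw [a1, sub_ne_zero]
  intro h
  have h' := AddMonoidAlgebra.single_left_injective (one_ne_zero : (1 : ℂ) ≠ 0) h
  simp at h'

lemma ι_a1_ne_zero : ι a1 ≠ 0 :=
  (map_ne_zero_iff ι (IsFractionRing.injective R2 K2)).mpr a1_ne_zero

/-- The symmetric conditions `p₁(t,M) = p₋₁(t,M⁻¹)` and `p₀(t,M) = p₀(t,M⁻¹)` hold
simultaneously if and only if `b₀(t,M⁻¹) = −b₀(t,M)`. -/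
theorem symmetric_conditions_iff (b0 p1 pm1 p0 : K2)
    (hp1 : p1 = ι a1 * b0 + ι (sU a0) / ι (sU a1))
    (hpm1 : pm1 = ι am1 * b0 + ι (sD a0) / ι (sD am1))
    (hp0 : p0 = ι a0 * b0 + ι (sD a1) / ι (sD am1) + ι (sU am1) / ι (sU a1)) :
    (p1 = σI pm1 ∧ p0 = σI p0) ↔ σI b0 = -b0 := by
  have h1 : p1 - σI pm1 = ι a1 * (b0 + σI b0) := by
    rw [hp1, hpm1]
    simp only [map_add, map_mul, map_div₀, σI_ι, sI_am1, sI_sD_a0, sI_sD_am1, map_neg,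
      neg_div_neg_eq]
    ring
  have h0 : p0 - σI p0 = ι a0 * (b0 + σI b0) := by
    rw [hp0]
    simp only [map_add, map_mul, map_div₀, σI_ι, sI_a0, sI_sD_a1, sI_sD_am1, sI_sU_am1,
      sI_sU_a1, map_neg, neg_div_neg_eq]
    ring
  rw [← sub_eq_zero (a := p1), ← sub_eq_zero (a := p0), h1, h0, eq_neg_iff_add_eq_zero,
    add_comm (σI b0)]
  constructor
  · rintro ⟨h, -⟩
    exact (mul_eq_zero.mp h).resolve_left ι_a1_ne_zero
  · intro h
    simp [h]
end
end

section
/- Each of the four polynomials g₁ = −M¹⁴(M⁸ − 1)(t⁴ + M⁸t⁴ − M⁴(1 + t⁸)), g₂ = −M¹⁰(M⁸ − 1)t²(t⁴ + M⁸t⁴ − M⁴(1 + t⁸)), g₃ = (M⁴ − 1)(M − t)(M + t)(Mt − 1)(Mt + 1)(M² + t²)(1 + M²t²)(M⁴ + M⁶ + M⁸ + 2M¹⁰ + 3M¹² + M¹⁴ + 2M¹⁶ − t⁴), and g₄ = t²(t − M)(M + t)(Mt − 1)(Mt + 1)(M² + t²)(1 + M²t²)(−M⁴ − M⁶ − M⁸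 + M¹⁴ + M¹⁶ + t⁴) lies in the ideal of the polynomial ring ℂ[t, M] generated by A₂ and B₂. -/
/-!
Write `P = (M⁴ - t⁴)(t⁴M⁴ - 1)`, `a = t²M⁴(M⁴ - t⁴)`, `c = -M⁸ + M⁶ + M² - 1` and
`b = (M⁴ - 1)(M⁴t⁸ + c t⁴ + M⁴)`. Clearing denominators gives `A₂ = -a P` and `B₂ = b P`, and every
`gᵢ` is divisible by `P`, so it suffices to write each `gᵢ / P` as `u a + v b`.

The cofactors come from working modulo `M⁴ - t⁴` (where `b` becomes `(M⁴ - 1) M⁶ (1 + M⁴)`) to fix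
`v`, adjusting it modulo `t` for `g₁` and `g₃`; then `u` is the exact quotient of `gᵢ / P - v b`
by `a`. The cofactors are recorded in the proof of the theorem, and `ring` checks the identities.
-/

noncomputable section

/-- `A₂ = t⁸M¹⁰A₁`. -/
def A2 : R2 := mon 8 10 * A1

/-- `B₂ = t⁸M¹⁰B₁`. -/
def B2 : R2 := mon 8 10 * B1

/-- The inclusion of the polynomial ring `ℂ[t, M]` (with `t = X 0`, `M = X 1`) into the
Laurent polynomial ring `ℂ[t^{±1}, M^{±1}]`. -/
def φ : MvPolynomial (Fin 2) ℂ →ₐ[ℂ] R2 := MvPolynomial.aeval ![mon 1 0, mon 0 1]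

/-- The variable `t` of the polynomial ring `ℂ[t, M]`. -/
def tP : MvPolynomial (Fin 2) ℂ := MvPolynomial.X 0

/-- The variable `M` of the polynomial ring `ℂ[t, M]`. -/
def MP : MvPolynomial (Fin 2) ℂ := MvPolynomial.X 1

/-- `g₁ = −M¹⁴(M⁸ − 1)(t⁴ + M⁸t⁴ − M⁴(1 + t⁸))` in `ℂ[t, M]`. -/
def G1 : MvPolynomial (Fin 2) ℂ :=
  -MP ^ 14 * (MP ^ 8 - 1) * (tP ^ 4 + MP ^ 8 * tP ^ 4 - MP ^ 4 * (1 + tP ^ 8))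

/-- `g₂ = −M¹⁰(M⁸ − 1)t²(t⁴ + M⁸t⁴ − M⁴(1 + t⁸))` in `ℂ[t, M]`. -/
def G2 : MvPolynomial (Fin 2) ℂ :=
  -MP ^ 10 * (MP ^ 8 - 1) * tP ^ 2 * (tP ^ 4 + MP ^ 8 * tP ^ 4 - MP ^ 4 * (1 + tP ^ 8))

/-- `g₃ = (M⁴ − 1)(M − t)(M + t)(Mt − 1)(Mt + 1)(M² + t²)(1 + M²t²)
(M⁴ + M⁶ + M⁸ + 2M¹⁰ + 3M¹² + M¹⁴ + 2M¹⁶ − t⁴)` in `ℂ[t, M]`. -/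
def G3 : MvPolynomial (Fin 2) ℂ :=
  (MP ^ 4 - 1) * (MP - tP) * (MP + tP) * (MP * tP - 1) * (MP * tP + 1) *
    (MP ^ 2 + tP ^ 2) * (1 + MP ^ 2 * tP ^ 2) *
    (MP ^ 4 + MP ^ 6 + MP ^ 8 + 2 * MP ^ 10 + 3 * MP ^ 12 + MP ^ 14 + 2 * MP ^ 16 - tP ^ 4)

/-- `g₄ = t²(t − M)(M + t)(Mt − 1)(Mt + 1)(M² + t²)(1 + M²t²)
(−M⁴ − M⁶ − M⁸ + M¹⁴ + M¹⁶ + t⁴)` in `ℂ[t, M]`. -/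
def G4 : MvPolynomial (Fin 2) ℂ :=
  tP ^ 2 * (tP - MP) * (MP + tP) * (MP * tP - 1) * (MP * tP + 1) *
    (MP ^ 2 + tP ^ 2) * (1 + MP ^ 2 * tP ^ 2) *
    (-MP ^ 4 - MP ^ 6 - MP ^ 8 + MP ^ 14 + MP ^ 16 + tP ^ 4)

lemma mon_mul_mon (a b c d : ℤ) : mon a b * mon c d = mon (a + c) (b + d) := by
  simp [mon, AddMonoidAlgebra.single_mul_single]

lemma mon_zero_zero : mon 0 0 = 1 := rfl

lemma mon_pow (a b : ℤ) (n : ℕ) : mon a b ^ n = mon (n * a) (n * b) := by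
  simp [mon, AddMonoidAlgebra.single_pow]

lemma φ_tP : φ tP = mon 1 0 := by simp [φ, tP]

lemma φ_MP : φ MP = mon 0 1 := by simp [φ, MP]

lemma a1_eq : a1 = mon (-2) (-2) * (mon 0 1 ^ 4 - mon 1 0 ^ 4) := by
  simp [a1, mul_sub, mon_pow, mon_mul_mon]

lemma sU_a1_eq : sU a1 = mon (-2) (-2) * (mon 1 0 ^ 4 * mon 0 1 ^ 4 - 1) := by
  simp [a1, mul_sub, mon_pow, mon_mul_mon, sU_mon]

lemma sD_am1_eq : sD am1 = mon (-2) (-2) * (mon 0 1 ^ 4 - mon 1 0 ^ 4) := by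
  simp [am1, mul_sub, mon_pow, mon_mul_mon, sD_mon]

lemma a0_eq : a0 = mon (-4) (-6) * ((mon 0 1 ^ 4 - 1) *
    (mon 0 1 ^ 4 * mon 1 0 ^ 8 + (-mon 0 1 ^ 8 + mon 0 1 ^ 6 + mon 0 1 ^ 2 - 1) * mon 1 0 ^ 4
      + mon 0 1 ^ 4)) := by
  have h : mon (-4) (-6) = mon 0 (-2) * mon (-4) (-4) := by simp [mon_mul_mon]
  have h1 : mon 0 2 - mon 0 (-2) = mon 0 (-2) * (mon 0 1 ^ 4 - 1) := by
    simp [mul_sub, mon_pow, mon_mul_mon]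
  have h2 : -(mon 0 4) - mon 0 (-4) + mon 0 2 + mon 0 (-2) + mon 4 0 + mon (-4) 0 =
      mon (-4) (-4) * (mon 0 1 ^ 4 * mon 1 0 ^ 8 +
        (-mon 0 1 ^ 8 + mon 0 1 ^ 6 + mon 0 1 ^ 2 - 1) * mon 1 0 ^ 4 + mon 0 1 ^ 4) := by
    simp [mul_sub, mul_add, sub_mul, add_mul, mon_pow, mon_mul_mon]
    abel
  rw [a0, h1, h2, h]
  ring

/-- `A₂` as a polynomial. -/
def A2P : MvPolynomial (Fin 2) ℂ :=
  -(tP ^ 2 * MP ^ 4 * (MP ^ 4 - tP ^ 4) * ((MP ^ 4 - tP ^ 4) * (tP ^ 4 * MP ^ 4 - 1)))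

/-- `B₂` as a polynomial. -/
def B2P : MvPolynomial (Fin 2) ℂ :=
  (MP ^ 4 - 1) * (MP ^ 4 * tP ^ 8 + (-MP ^ 8 + MP ^ 6 + MP ^ 2 - 1) * tP ^ 4 + MP ^ 4) *
    ((MP ^ 4 - tP ^ 4) * (tP ^ 4 * MP ^ 4 - 1))

lemma φ_A2P : φ A2P = A2 := by
  have h : mon 8 10 * mon (-2) (-2) ^ 3 = mon 1 0 ^ 2 * mon 0 1 ^ 4 := by
    simp [mon_pow, mon_mul_mon]
  rw [A2, A1, sU_a1_eq, sD_am1_eq, a1_eq]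
  simp only [A2P, map_neg, map_mul, map_sub, map_pow, map_one, φ_tP, φ_MP]
  linear_combination ((mon 0 1 ^ 4 - mon 1 0 ^ 4) ^ 2 * (mon 1 0 ^ 4 * mon 0 1 ^ 4 - 1)) * h

lemma φ_B2P : φ B2P = B2 := by
  have h : mon 8 10 * mon (-4) (-6) * mon (-2) (-2) ^ 2 = 1 := by
    simp [mon_pow, mon_mul_mon, mon_zero_zero]
  rw [B2, B1, a0_eq, sU_a1_eq, sD_am1_eq]
  simp only [B2P, map_neg, map_mul, map_sub, map_add, map_pow, map_one, φ_tP, φ_MP]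
  linear_combination (-(mon 0 1 ^ 4 - 1) *
    (mon 0 1 ^ 4 * mon 1 0 ^ 8 + (-mon 0 1 ^ 8 + mon 0 1 ^ 6 + mon 0 1 ^ 2 - 1) * mon 1 0 ^ 4
      + mon 0 1 ^ 4) * (mon 0 1 ^ 4 - mon 1 0 ^ 4) * (mon 1 0 ^ 4 * mon 0 1 ^ 4 - 1)) * h

/-- `A₂` and `B₂` are (the images of) polynomials in `ℂ[t, M]`, and each of `g₁, g₂, g₃, g₄`
lies in the ideal of the polynomial ring `ℂ[t, M]` generated by `A₂` and `B₂`. -/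
theorem groebner_basis_mem_span :
    ∃ A2' B2' : MvPolynomial (Fin 2) ℂ, φ A2' = A2 ∧ φ B2' = B2 ∧
      G1 ∈ Ideal.span ({A2', B2'} : Set (MvPolynomial (Fin 2) ℂ)) ∧
      G2 ∈ Ideal.span ({A2', B2'} : Set (MvPolynomial (Fin 2) ℂ)) ∧
      G3 ∈ Ideal.span ({A2', B2'} : Set (MvPolynomial (Fin 2) ℂ)) ∧
      G4 ∈ Ideal.span ({A2', B2'} : Set (MvPolynomial (Fin 2) ℂ)) := by
  refine ⟨A2P, B2P, φ_A2P, φ_B2P, ?_, ?_, ?_, ?_⟩ <;> rw [Ideal.mem_span_pair]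
  · refine ⟨(MP ^ 4 - 1) * tP ^ 2 * (-MP ^ 4 * (MP ^ 6 + MP ^ 2 - 1) * tP ^ 4
        + (MP ^ 6 - 1) * (MP ^ 2 - 1) * MP ^ 2 * (1 + MP ^ 4) + MP ^ 6 + MP ^ 2 - 1),
      -(MP ^ 10 * (1 + MP ^ 4) - tP ^ 4 * MP ^ 4 * (MP ^ 6 + MP ^ 2 - 1)), ?_⟩
    simp only [A2P, B2P, G1]
    ring
  · refine ⟨(MP ^ 4 - 1) * (MP ^ 4 * (MP ^ 4 + tP ^ 4) - MP ^ 8 + MP ^ 6 + MP ^ 2 - 1),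
      -(MP ^ 4 * tP ^ 2), ?_⟩
    simp only [A2P, B2P, G2]
    ring
  · refine ⟨-((MP ^ 4 - 1) * tP ^ 2 * (-MP ^ 4 * (3 + MP ^ 2 + 2 * MP ^ 4) * tP ^ 4
        + (4 - MP ^ 2 + 2 * MP ^ 4 - 3 * MP ^ 6 + 2 * MP ^ 8 - MP ^ 10 + 2 * MP ^ 12))),
      1 + MP ^ 2 + MP ^ 4 + 2 * MP ^ 6 + 3 * MP ^ 8 + MP ^ 10 + 2 * MP ^ 12
        - tP ^ 4 * MP ^ 4 * (3 + MP ^ 2 + 2 * MP ^ 4), ?_⟩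
    simp only [A2P, B2P, G3]
    ring
  · refine ⟨(MP ^ 2 + 1) * (MP ^ 4 - 1) * tP ^ 4 + MP ^ 8 + MP ^ 6 - MP ^ 2 - 2,
      -(tP ^ 2 * (MP ^ 2 + 1)), ?_⟩
    simp only [A2P, B2P, G4]
    ring
end
end

section
/- Suppose p₀, p₁ ∈ ℂ[t^{±1}, M^{±1}] satisfy A₁(t,M)·p₀ + B₁(t,M)·p₁ = C₁(t,M). Then p₁(1,M) = ã₁(M) if and only if p₀(1,M) = ã₀(M), where F(1,M) denotes the image of F under the substitution t ↦ 1. -/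
/-!
Setting `t = 1` makes both substitutions `M ↦ t^{±2}M` trivial. With `x = M² − M⁻²` and
`c = −M⁴ − M⁻⁴ + M² + M⁻² + 2`, the hypothesis specializes to
`−x³ p₀(1,M) + x³ c p₁(1,M) = x³ (c² − 2)`, and cancelling `x³` in the domain `ℂ[M^{±1}]` gives
`p₀(1,M) = c p₁(1,M) − c² + 2`. Since `ã₁ = 2c` and `ã₀ = c² + 2`, this reads
`p₀(1,M) − ã₀ = c (p₁(1,M) − ã₁)`, and the equivalence follows from `c ≠ 0`.
-/

noncomputable section

/-- The substitution ring homomorphism `t ↦ 1`, from `ℂ[t^{±1}, M^{±1}]` onto `ℂ[M^{±1}]`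
(the latter realized as the Laurent polynomial ring `LaurentPolynomial ℂ`). -/
def ev1 : R2 →+* LaurentPolynomial ℂ :=
  AddMonoidAlgebra.mapDomainRingHom ℂ (AddMonoidHom.snd ℤ ℤ)

/-- `ã₁(M) = −2M⁴ − 2M⁻⁴ + 2M² + 2M⁻² + 4` in `ℂ[M^{±1}]`. -/
def ta1 : LaurentPolynomial ℂ :=
  -2 * LaurentPolynomial.T 4 - 2 * LaurentPolynomial.T (-4)
    + 2 * LaurentPolynomial.T 2 + 2 * LaurentPolynomial.T (-2) + 4

/-- `ã₀(M) = M⁸ + M⁻⁸ − 2M⁶ − 2M⁻⁶ − 3M⁴ − 3M⁻⁴ + 2M² + 2M⁻² + 10` in `ℂ[M^{±1}]`. -/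
def ta0 : LaurentPolynomial ℂ :=
  LaurentPolynomial.T 8 + LaurentPolynomial.T (-8)
    - 2 * LaurentPolynomial.T 6 - 2 * LaurentPolynomial.T (-6)
    - 3 * LaurentPolynomial.T 4 - 3 * LaurentPolynomial.T (-4)
    + 2 * LaurentPolynomial.T 2 + 2 * LaurentPolynomial.T (-2) + 10

open LaurentPolynomial in
lemma ev1_mon (a b : ℤ) : ev1 (mon a b) = T b := by
  simp [ev1, mon, -single_eq_C_mul_T, T]

lemma ev1_sU (p : R2) : ev1 (sU p) = ev1 p := by
  have : ev1.comp (sU : R2 →+* R2) = ev1 := by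
    ext <;> simp [ev1, sU, eU]
  exact congrArg (fun f => f p) this

lemma ev1_sD (p : R2) : ev1 (sD p) = ev1 p := by
  have : ev1.comp (sD : R2 →+* R2) = ev1 := by
    ext <;> simp [ev1, sD, eD]
  exact congrArg (fun f => f p) this

/-- `M² − M⁻²`, the common value of `a₁` and `a₋₁` at `t = 1`. -/
def xPoly : LaurentPolynomial ℂ := LaurentPolynomial.T 2 - LaurentPolynomial.T (-2)

/-- `−M⁴ − M⁻⁴ + M² + M⁻² + 2`, the second factor of `a₀` at `t = 1`. -/
def cPoly : LaurentPolynomial ℂ :=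
  -LaurentPolynomial.T 4 - LaurentPolynomial.T (-4)
    + LaurentPolynomial.T 2 + LaurentPolynomial.T (-2) + 2

lemma ev1_a1 : ev1 a1 = xPoly := by
  simp [a1, ev1_mon, xPoly]

lemma ev1_am1 : ev1 am1 = xPoly := by
  simp [am1, ev1_mon, xPoly]

lemma ev1_a0 : ev1 a0 = xPoly * cPoly := by
  simp only [a0, map_mul, map_add, map_sub, map_neg, ev1_mon, xPoly, cPoly,
    LaurentPolynomial.T_zero]
  ring

open LaurentPolynomial in
lemma xPoly_ne_zero : xPoly ≠ 0 := by
  intro h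
  have := congrArg (fun p : LaurentPolynomial ℂ => p.coeff 2) h
  simp [xPoly] at this

open LaurentPolynomial in
lemma cPoly_ne_zero : cPoly ≠ 0 := by
  intro h
  -- Writing the constant as monomials exposes its coefficients.
  have h2 : (2 : LaurentPolynomial ℂ) = T 0 + T 0 := by rw [T_zero]; norm_num
  have := congrArg (fun p : LaurentPolynomial ℂ => p.coeff 4) h
  rw [cPoly, h2] at this
  simp [-T_zero] at this

lemma ta1_eq : ta1 = 2 * cPoly := by
  simp only [ta1, cPoly]
  ring

open LaurentPolynomial in
lemma ta0_eq : ta0 = cPoly ^ 2 + 2 := by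
  -- With `u = M²` and `v = M⁻²`, the identity is polynomial modulo `u v = 1`.
  have huv : (T 2 : LaurentPolynomial ℂ) * T (-2) = 1 := by rw [← T_add]; simp
  have h4 : (T 4 : LaurentPolynomial ℂ) = T 2 ^ 2 := by rw [T_pow]; norm_num
  have h6 : (T 6 : LaurentPolynomial ℂ) = T 2 ^ 3 := by rw [T_pow]; norm_num
  have h8 : (T 8 : LaurentPolynomial ℂ) = T 2 ^ 4 := by rw [T_pow]; norm_num
  have k4 : (T (-4) : LaurentPolynomial ℂ) = T (-2) ^ 2 := by rw [T_pow]; norm_num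
  have k6 : (T (-6) : LaurentPolynomial ℂ) = T (-2) ^ 3 := by rw [T_pow]; norm_num
  have k8 : (T (-8) : LaurentPolynomial ℂ) = T (-2) ^ 4 := by rw [T_pow]; norm_num
  simp only [ta0, cPoly, h4, h6, h8, k4, k6, k8]
  generalize (T 2 : LaurentPolynomial ℂ) = u at *
  generalize (T (-2) : LaurentPolynomial ℂ) = v at *
  linear_combination (-2 * u * v - 4 + 2 * u + 2 * v) * huv

/-- If `p₀, p₁ ∈ ℂ[t^{±1}, M^{±1}]` satisfy `A₁p₀ + B₁p₁ = C₁`, then `p₁(1,M) = ã₁(M)`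
if and only if `p₀(1,M) = ã₀(M)`. -/
theorem initial_conditions_equivalent (p0 p1 : R2) (h : A1 * p0 + B1 * p1 = C1) :
    ev1 p1 = ta1 ↔ ev1 p0 = ta0 := by
  have key : ev1 p0 - ta0 = cPoly * (ev1 p1 - ta1) := by
    have h1 := congrArg ev1 h
    simp only [A1, B1, C1, map_add, map_sub, map_neg, map_mul, ev1_sU, ev1_sD, ev1_a1, ev1_am1,
      ev1_a0] at h1
    apply mul_left_cancel₀ (pow_ne_zero 3 xPoly_ne_zero)
    rw [ta0_eq, ta1_eq]
    linear_combination -h1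
  rw [← sub_eq_zero, ← sub_eq_zero (a := ev1 p0), key, mul_eq_zero, or_iff_right cPoly_ne_zero]
end
end

section
/- In the Laurent polynomial ring ℂ[M^{±1}, L^{±1}] (two commuting variables M, L over ℂ), the identity L² + L⁻² + p₁(1,M)·L + p₋₁(1,M)·L⁻¹ + p₀(1,M) = (L + L⁻¹ − M⁴ − M⁻⁴ + M² + M⁻² + 2)² holds, where p_i(1,M) denotes the image of p_i under the substitution t ↦ 1. In particular p₁(1,M) = p₋₁(1,M) = −2M⁴ − 2M⁻⁴ + 2M² + 2M⁻² + 4 and p₀(1,M) = M⁸ + M⁻⁸ − 2M⁶ − 2M⁻⁶ − 3M⁴ − 3M⁻⁴ + 2M² + 2M⁻² + 10. -/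
/-!
Both sides are finite sums of monomials. The substitution `t ↦ 1` sends `t^a M^b` to `M^b` and the
inclusion sends `M^n` to `M^n L^0` (`ev1_mon`, `inclM_T`), so the values of `p₁`, `p₋₁`, `p₀` at
`t = 1` follow by multiplying out the monomials and collecting terms. With these values the
identity is the expansion of the square of `L + L⁻¹ + a`, where
`a = − M⁴ − M⁻⁴ + M² + M⁻² + 2`: its `L^{±1}` coefficient is `2a = ã₁`, and its `L⁰` coefficient is
`a² + 2 = ã₀`.
-/

noncomputable section

/-- `p₁(t,M) = M⁻⁴t⁻¹⁰·(−1 − t¹⁶ + M⁴t⁸(1+t⁴)² + M²(t⁴+t¹²) + M⁶(t⁸+t¹⁶) − M⁸(t¹²+t²⁰))`. -/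
def P1 : R2 :=
  mon (-10) (-4) *
    (-1 - mon 16 0 + mon 8 4 * (1 + mon 4 0) ^ 2 + mon 0 2 * (mon 4 0 + mon 12 0)
      + mon 0 6 * (mon 8 0 + mon 16 0) - mon 0 8 * (mon 12 0 + mon 20 0))

/-- `p₋₁(t,M) = M⁻⁴t⁻¹⁰·(M⁴t⁸(1+t⁴)² − t¹²(1+t⁸) + M⁶(t⁴+t¹²) − M⁸(1+t¹⁶) + M²(t⁸+t¹⁶))`. -/
def Pm1 : R2 :=
  mon (-10) (-4) *
    (mon 8 4 * (1 + mon 4 0) ^ 2 - mon 12 0 * (1 + mon 8 0) + mon 0 6 * (mon 4 0 + mon 12 0)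
      - mon 0 8 * (1 + mon 16 0) + mon 0 2 * (mon 8 0 + mon 16 0))

/-- `p₀(t,M) = M⁻⁸t⁻⁴·(t⁸ + M¹⁶t⁸ − M⁴t⁸(2+t⁴) − M¹²t⁸(2+t⁴) − M²(t⁴+t⁸) + M⁶(t⁴+t⁸)
    + M¹⁰(t⁴+t⁸) − M¹⁴(t⁴+t⁸) + 2M⁸(1+t⁴+2t⁸+t¹²))`. -/
def P0 : R2 :=
  mon (-4) (-8) *
    (mon 8 0 + mon 8 16 - mon 8 4 * (2 + mon 4 0) - mon 8 12 * (2 + mon 4 0)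
      - mon 0 2 * (mon 4 0 + mon 8 0) + mon 0 6 * (mon 4 0 + mon 8 0)
      + mon 0 10 * (mon 4 0 + mon 8 0) - mon 0 14 * (mon 4 0 + mon 8 0)
      + 2 * mon 0 8 * (1 + mon 4 0 + 2 * mon 8 0 + mon 12 0))

/-- The Laurent polynomial ring `ℂ[M^{±1}, L^{±1}]`, realized as the group algebra of `ℤ × ℤ`
over `ℂ`.  The element `monML a b` below is the monomial `M^a * L^b`. -/
abbrev SML : Type := AddMonoidAlgebra ℂ (ℤ × ℤ)

/-- The monomial `M^a * L^b` in `ℂ[M^{±1}, L^{±1}]`. -/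
def monML (a b : ℤ) : SML := AddMonoidAlgebra.single (a, b) (1 : ℂ)

/-- The inclusion `ℂ[M^{±1}] → ℂ[M^{±1}, L^{±1}]`. -/
def inclM : LaurentPolynomial ℂ →+* SML :=
  AddMonoidAlgebra.mapDomainRingHom ℂ (AddMonoidHom.inl ℤ ℤ)

open LaurentPolynomial in
lemma inclM_T (n : ℤ) : inclM (T n) = monML n 0 := by
  exact AddMonoidAlgebra.mapDomain_single

lemma monML_mul (a b c d : ℤ) : monML a b * monML c d = monML (a + c) (b + d) := by
  simp [monML, AddMonoidAlgebra.single_mul_single]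

lemma monML_zero : monML 0 0 = 1 := rfl

open LaurentPolynomial in
lemma ev1_P1 : ev1 P1 = ta1 := by
  have h (b : ℤ) : (T (-4) : LaurentPolynomial ℂ) * T b = T (-4 + b) := (T_add _ _).symm
  simp only [P1, ta1, map_mul, map_add, map_sub, map_neg, map_pow, map_one, ev1_mon, T_zero]
  ring_nf
  simp only [h]
  norm_num
  ring

open LaurentPolynomial in
lemma ev1_Pm1 : ev1 Pm1 = ta1 := by
  have h (b : ℤ) : (T (-4) : LaurentPolynomial ℂ) * T b = T (-4 + b) := (T_add _ _).symm
  simp only [Pm1, ta1, map_mul, map_add, map_sub, map_pow, map_one, ev1_mon, T_zero]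
  ring_nf
  simp only [h]
  norm_num
  ring

open LaurentPolynomial in
lemma ev1_P0 : ev1 P0 = ta0 := by
  have h (b : ℤ) : (T (-8) : LaurentPolynomial ℂ) * T b = T (-8 + b) := (T_add _ _).symm
  simp only [P0, ta0, map_mul, map_add, map_sub, map_one, map_ofNat, ev1_mon, T_zero]
  ring_nf
  simp only [h]
  norm_num
  ring

/-- Setting `t = 1` in the recurrence polynomial `P` yields the square of the nonabelian
A-polynomial of the figure-eight knot:
`L² + L⁻² + p₁(1,M)L + p₋₁(1,M)L⁻¹ + p₀(1,M) = (L + L⁻¹ − M⁴ − M⁻⁴ + M² + M⁻² + 2)²`,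
and in particular `p₁(1,M) = p₋₁(1,M) = −2M⁴ − 2M⁻⁴ + 2M² + 2M⁻² + 4` and
`p₀(1,M) = M⁸ + M⁻⁸ − 2M⁶ − 2M⁻⁶ − 3M⁴ − 3M⁻⁴ + 2M² + 2M⁻² + 10`. -/
theorem epsilon_P_eq_A_poly_squared :
    (monML 0 2 + monML 0 (-2) + inclM (ev1 P1) * monML 0 1 + inclM (ev1 Pm1) * monML 0 (-1)
        + inclM (ev1 P0) =
      (monML 0 1 + monML 0 (-1) - monML 4 0 - monML (-4) 0 + monML 2 0 + monML (-2) 0 + 2) ^ 2)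
      ∧ ev1 P1 = ta1 ∧ ev1 Pm1 = ta1 ∧ ev1 P0 = ta0 := by
  refine ⟨?_, ev1_P1, ev1_Pm1, ev1_P0⟩
  rw [ev1_P1, ev1_Pm1, ev1_P0]
  simp only [ta1, ta0, map_mul, map_add, map_sub, map_neg, map_ofNat, inclM_T]
  ring_nf
  simp only [sq, monML_mul]
  norm_num [monML_zero]
  ring
end
end

section
/- With b₀(t,M) = −(M−1)(M+1)(1+M²)t⁴(−M² − M⁴ − M⁶ + t⁴ + M⁸t⁴ − M⁴t⁸) / (M²(M−t)(M+t)(Mt−1)(Mt+1)(M²+t²)(1+M²t²)) ∈ ℂ(t,M), the following three identities hold in ℂ(t,M): p₁(t,M) = a₁(t,M)·b₀ + a₀(t,t²M)/a₁(t,t²M); p₋₁(t,M) = a₋₁(t,M)·b₀ + a₀(t,t⁻²M)/a₋₁(t,t⁻²M); and p₀(t,M) = a₀(t,M)·b₀ + a₁(t,t⁻²M)/a₋₁(t,t⁻²M) + a₋₁(t,t²M)/a₁(t,t²M). -/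
/-!
Both substitutions send monomials to monomials, so in the field `ℂ(t,M)` each identity is an
equation between rational expressions in `t` and `M` (`ι_mon`, `sU_mon`, `sD_mon`). The only
denominators that are not monomials are `M⁴ - t⁴` and `t⁴M⁴ - 1`: up to a monomial they are
`a₋₁(t,t⁻²M)` and `a₁(t,t²M)`, and `M²` times their product is the denominator of `b₀`. Both are nonzero
because distinct monomials are distinct elements, so clearing denominators reduces each identity to
a polynomial one.
-/

noncomputable section

/-- Numerator `(M−1)(M+1)(1+M²)t⁴(−M² − M⁴ − M⁶ + t⁴ + M⁸t⁴ − M⁴t⁸)`. -/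
def b0num : R2 :=
  (mon 0 1 - 1) * (mon 0 1 + 1) * (1 + mon 0 2) * mon 4 0 *
    (-(mon 0 2) - mon 0 4 - mon 0 6 + mon 4 0 + mon 4 8 - mon 8 4)

/-- Denominator `M²(M−t)(M+t)(Mt−1)(Mt+1)(M²+t²)(1+M²t²)`. -/
def b0den : R2 :=
  mon 0 2 * (mon 0 1 - mon 1 0) * (mon 0 1 + mon 1 0) * (mon 1 1 - 1) * (mon 1 1 + 1) *
    (mon 0 2 + mon 2 0) * (1 + mon 2 2)

/-- The rational function
`b₀(t,M) = −(M−1)(M+1)(1+M²)t⁴(−M² − M⁴ − M⁶ + t⁴ + M⁸t⁴ − M⁴t⁸)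
/ (M²(M−t)(M+t)(Mt−1)(Mt+1)(M²+t²)(1+M²t²)) ∈ ℂ(t,M)`. -/
def b0 : K2 := -(ι b0num / ι b0den)

/-- Every monomial `t^a M^b` becomes a product of integer powers in the field `ℂ(t,M)`. -/
lemma ι_mon (a b : ℤ) : ι (mon a b) = ι (mon 1 0) ^ a * ι (mon 0 1) ^ b := by
  -- Monomials form a multiplicative copy of `ℤ × ℤ`, and homomorphisms preserve integer powers.
  let f : Multiplicative (ℤ × ℤ) →* K2 :=
    (ι : R2 →* K2).comp (AddMonoidAlgebra.of ℂ (ℤ × ℤ))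
  have hf (x y : ℤ) : ι (mon x y) = f (Multiplicative.ofAdd (x, y)) := rfl
  have hz (g : Multiplicative (ℤ × ℤ)) (n : ℤ) : f (g ^ n) = f g ^ n := by
    simp
  rw [hf, hf, hf, ← hz, ← hz, ← map_mul]
  congr 1
  rw [← ofAdd_zsmul, ← ofAdd_zsmul, ← ofAdd_add]
  simp

lemma ι_injective : Function.Injective ι := IsFractionRing.injective R2 K2

lemma mon_injective {a b c d : ℤ} (h : mon a b = mon c d) : a = c ∧ b = d := by
  have := AddMonoidAlgebra.single_left_injective (one_ne_zero : (1 : ℂ) ≠ 0) h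
  simpa using this

lemma ι_mon_ne_zero (a b : ℤ) : ι (mon a b) ≠ 0 := by
  rw [Ne, map_eq_zero_iff ι ι_injective]
  simp [mon, AddMonoidAlgebra.single_eq_zero]

/-- With the explicit `b₀`, the Laurent polynomials `p₁, p₋₁, p₀` are given by the
formulas `pᵢ = aᵢ·b₀ + (correction terms)` in `ℂ(t,M)`. -/
theorem explicit_solution_formulas :
    ι P1 = ι a1 * b0 + ι (sU a0) / ι (sU a1) ∧
      ι Pm1 = ι am1 * b0 + ι (sD a0) / ι (sD am1) ∧
      ι P0 = ι a0 * b0 + ι (sD a1) / ι (sD am1) + ι (sU am1) / ι (sU a1) := by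
  have hT := ι_mon_ne_zero 1 0
  have hM := ι_mon_ne_zero 0 1
  -- The two factors `M⁴ - t⁴` and `t⁴M⁴ - 1` account for every denominator up to monomials.
  have h1 : ι (mon 0 1) ^ 4 - ι (mon 1 0) ^ 4 ≠ 0 := by
    intro h
    have hmon : ι (mon 0 4) = ι (mon 4 0) := by
      rw [ι_mon 0 4, ι_mon 4 0]
      simpa [sub_eq_zero] using h
    simpa using mon_injective (ι_injective hmon)
  have h2 : ι (mon 1 0) ^ 4 * ι (mon 0 1) ^ 4 - 1 ≠ 0 := by
    intro h
    have hmon : ι (mon 4 4) = ι (mon 0 0) := by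
      rw [ι_mon 4 4, ι_mon 0 0]
      simpa [sub_eq_zero] using h
    simpa using mon_injective (ι_injective hmon)
  have hden : ι b0den = ι (mon 0 1) ^ 2 * (ι (mon 0 1) ^ 4 - ι (mon 1 0) ^ 4)
      * (ι (mon 1 0) ^ 4 * ι (mon 0 1) ^ 4 - 1) := by
    simp only [b0den, map_mul, map_add, map_sub, map_one]
    rw [ι_mon 0 2, ι_mon 1 1, ι_mon 2 0, ι_mon 2 2]
    simp only [zpow_ofNat]
    ring
  have hU : ι (sU a1) = (ι (mon 1 0) ^ 4 * ι (mon 0 1) ^ 4 - 1)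
      / (ι (mon 0 1) ^ 2 * ι (mon 1 0) ^ 2) := by
    simp only [a1, map_sub, sU_mon]
    norm_num only
    rw [ι_mon 2 2, ι_mon (-2) (-2)]
    simp only [zpow_neg, zpow_ofNat]
    field_simp
  have hD : ι (sD am1) = (ι (mon 0 1) ^ 4 - ι (mon 1 0) ^ 4)
      / (ι (mon 0 1) ^ 2 * ι (mon 1 0) ^ 2) := by
    simp only [am1, map_sub, sD_mon]
    norm_num only
    rw [ι_mon (-2) 2, ι_mon 2 (-2)]
    simp only [zpow_neg, zpow_ofNat]
    field_simp
  rw [b0, hden, hU, hD]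
  simp only [P1, Pm1, P0, a1, am1, a0, b0num, map_mul, map_add, map_sub, map_neg, map_pow,
    map_one, map_ofNat, sU_mon, sD_mon]
  norm_num only
  -- Abstracting the generators first keeps `ι_mon` from rewriting `mon 1 0` and `mon 0 1` again.
  have key := ι_mon
  generalize ι (mon 1 0) = T at *
  generalize ι (mon 0 1) = m at *
  simp only [key, zpow_neg, zpow_ofNat]
  refine ⟨?_, ?_, ?_⟩
  · field_simp
    ring
  · field_simp
    ring
  · field_simp
    ring
end
end
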